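/- Critical point: if μ₁ = ln 6, then the boundary length is of order √N; precisely, for all reals 0 < a < b < ∞, lim_{ε→0⁺} limsup_{N→∞} [ P_N({m : m < ε√N}) + P_N({m : m > ε^{−1}√N}) ] / P_N({m : a√N ≤ m ≤ b√N}) = 0. -/

import Mathlib

/-!
The partition function cancels, so only the weights `w(m) = 6^{-m/2} C₀(N,m)` matter. All the
factorials disappear from the quotient of two consecutive weights of the same parity, which is a
rational function of `m` and `N`, and at `μ₁ = log 6` it satisfies
`(1 + 1/m) (1 - 10m/(3N)) ≤ w(m+2)/w(m) ≤ m/(m-1) · (1 - 5m/(6N))`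
(`critW_lower`, `critW_upper`). The terms `1/m` and `m/N` balance at `m` of order `√N`, whence the
scale; no asymptotics of factorials are needed.

Fix a reference length `m₀` of order `√N`, of the parity of `N`, below `√N/4` and `a√N`.
* `w` increases up to `m₀`, so the lengths `m < ε√N` have total weight at most
  `2ε√N · w(m₀)` (`sum_small`).
* From `m₀` to `2√N` the weight grows at most by a constant factor, and beyond `2√N` one has
  `w(m) - w(m+2) ≥ (m/2N) w(m)`; telescoping this over `m > ε⁻¹√N` bounds the total weight there by
  a constant times `ε√N · w(m₀)` (`sum_large`).
* Between `m₀` and `b√N` the weight loses at most a constant factor, so the window has total weight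
  at least a constant times `√N · w(m₀)` (`sum_mid`).

The quotient is therefore `O(ε)` for all `N` large in terms of `ε` (`ratio_bound`).
-/
open Finset

/-- `C₀ N m` is the number of rooted triangulations of the disk with `N` triangles and
`m` boundary edges: for `m ≥ 2`, `N ≥ m`, `N ≡ m (mod 2)` and `j = (N−m)/2` it equals
`2^{j+2}·(2m+3j−1)!·(2m−3)! / ((j+1)!·(2m+2j)!·((m−2)!)²)`, and `0` otherwise. -/
noncomputable def C₀ (N m : ℕ) : ℝ :=
  if 2 ≤ m ∧ m ≤ N ∧ N % 2 = m % 2 then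
    (2 : ℝ) ^ ((N - m) / 2 + 2) *
      (Nat.factorial (2 * m + 3 * ((N - m) / 2) - 1) : ℝ) *
      (Nat.factorial (2 * m - 3) : ℝ) /
      ((Nat.factorial ((N - m) / 2 + 1) : ℝ) *
        (Nat.factorial (2 * m + 2 * ((N - m) / 2)) : ℝ) *
        (Nat.factorial (m - 2) : ℝ) ^ 2)
  else 0

/-- The partition function `Θ_N(μ₁) = Σ_m e^{−μ₁ m/2} C₀(N,m)`. -/
noncomputable def Θ (μ₁ : ℝ) (N : ℕ) : ℝ :=
  ∑ m ∈ Finset.range (N + 1), Real.exp (-μ₁ * m / 2) * C₀ N m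

/-- The boundary-length distribution `P_N(m) = e^{−μ₁ m/2} C₀(N,m) / Θ_N(μ₁)`. -/
noncomputable def P (μ₁ : ℝ) (N m : ℕ) : ℝ :=
  Real.exp (-μ₁ * m / 2) * C₀ N m / Θ μ₁ N

open Filter

/-- Probability of a set of boundary lengths, `P_N(A) = Σ_{m∈A} P_N(m)`. -/
noncomputable def Pset (μ₁ : ℝ) (N : ℕ) (A : Set ℕ) : ℝ :=
  ∑' m : A, P μ₁ N (m : ℕ)

/-! ### Critical weights and their step ratio -/

/-- The unnormalised critical weight `6^{-m/2} C₀(N,m)`. -/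
noncomputable def critW (N m : ℕ) : ℝ := Real.exp (-Real.log 6 * m / 2) * C₀ N m

lemma C₀_nonneg (N m : ℕ) : 0 ≤ C₀ N m := by
  unfold C₀
  split_ifs <;> positivity

lemma critW_nonneg (N m : ℕ) : 0 ≤ critW N m :=
  mul_nonneg (Real.exp_pos _).le (C₀_nonneg N m)

lemma critW_pos {N m : ℕ} (h : 2 ≤ m ∧ m ≤ N ∧ N % 2 = m % 2) : 0 < critW N m := by
  unfold critW C₀
  rw [if_pos h]
  positivity

lemma critW_eq_zero {N m : ℕ} (h : ¬ (2 ≤ m ∧ m ≤ N ∧ N % 2 = m % 2)) : critW N m = 0 := by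
  unfold critW C₀
  rw [if_neg h, mul_zero]

/-- The exact ratio of two consecutive values of `C₀ N`, with `m = n + 2` and
`N = m + 2 (t + 1)`. -/
lemma C₀_succ (n t : ℕ) :
    C₀ (n + 4 + 2 * t) (n + 4) * ((2 * n + 2 * t + 7) * (n + t + 4) * (n + 1) * (n + 2)) =
    C₀ (n + 4 + 2 * t) (n + 2) * ((2 * n + 3 * t + 7) * (2 * n + 3) * (2 * n + 5) * (t + 2)) := by
  unfold C₀
  rw [if_pos (by omega), if_pos (by omega)]
  have e1 : (n + 4 + 2 * t - (n + 4)) / 2 = t := by omega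
  have e2 : (n + 4 + 2 * t - (n + 2)) / 2 = t + 1 := by omega
  rw [e1, e2]
  have f1 : 2 * (n + 4) + 3 * t - 1 = (2 * n + 3 * t + 6) + 1 := by omega
  have f2 : 2 * (n + 2) + 3 * (t + 1) - 1 = 2 * n + 3 * t + 6 := by omega
  have f3 : 2 * (n + 4) - 3 = 2 * n + 1 + 1 + 1 + 1 + 1 := by omega
  have f4 : 2 * (n + 2) - 3 = 2 * n + 1 := by omega
  have f5 : 2 * (n + 4) + 2 * t = (2 * n + 2 * t + 6) + 1 + 1 := by omega
  have f6 : 2 * (n + 2) + 2 * (t + 1) = 2 * n + 2 * t + 6 := by omega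
  have f7 : n + 4 - 2 = n + 1 + 1 := by omega
  have f8 : n + 2 - 2 = n := by omega
  rw [f1, f2, f3, f4, f5, f6, f7, f8]
  have g1 := Nat.factorial_succ (2 * n + 3 * t + 6)
  have g2 := Nat.factorial_succ (2 * n + 1)
  have g3 := Nat.factorial_succ (2 * n + 1 + 1)
  have g4 := Nat.factorial_succ (2 * n + 1 + 1 + 1)
  have g5 := Nat.factorial_succ (2 * n + 1 + 1 + 1 + 1)
  have g6 := Nat.factorial_succ (2 * n + 2 * t + 6)
  have g7 := Nat.factorial_succ (2 * n + 2 * t + 6 + 1)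
  have g8 := Nat.factorial_succ n
  have g9 := Nat.factorial_succ (n + 1)
  have g10 := Nat.factorial_succ (t + 1)
  rw [g1, g5, g4, g3, g2, g7, g6, g9, g8, g10]
  have p1 : ((2 * n + 2 * t + 6).factorial : ℝ) ≠ 0 := by positivity
  have p2 : (n.factorial : ℝ) ≠ 0 := by positivity
  have p3 : ((t + 1).factorial : ℝ) ≠ 0 := by positivity
  push_cast
  generalize ((2 * n + 2 * t + 6).factorial : ℝ) = x1 at *
  generalize (n.factorial : ℝ) = x2 at *
  generalize ((t + 1).factorial : ℝ) = x3 at *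
  generalize ((2 * n + 3 * t + 6).factorial : ℝ) = x4 at *
  generalize ((2 * n + 1).factorial : ℝ) = x5 at *
  have q1 : (2 * (n:ℝ) + 2 * t + 6 + 1) ≠ 0 := by positivity
  have q2 : (2 * (n:ℝ) + 2 * t + 6 + 1 + 1) ≠ 0 := by positivity
  have q3 : ((n:ℝ) + 1) ≠ 0 := by positivity
  have q4 : ((n:ℝ) + 1 + 1) ≠ 0 := by positivity
  have q5 : ((t:ℝ) + 1 + 1) ≠ 0 := by positivity
  rw [div_mul_eq_mul_div, div_mul_eq_mul_div, div_eq_div_iff (by positivity) (by positivity)]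
  ring

lemma critW_succ (n t : ℕ) :
    critW (n + 4 + 2 * t) (n + 4) *
      (6 * ((2 * n + 2 * t + 7) * (n + t + 4) * (n + 1) * (n + 2))) =
    critW (n + 4 + 2 * t) (n + 2) *
      ((2 * n + 3 * t + 7) * (2 * n + 3) * (2 * n + 5) * (t + 2)) := by
  have h := C₀_succ n t
  have e : Real.exp (-Real.log 6 * ((n + 4 : ℕ) : ℝ) / 2) * 6
      = Real.exp (-Real.log 6 * ((n + 2 : ℕ) : ℝ) / 2) := by
    conv_lhs => rw [← Real.exp_log (show (0:ℝ) < 6 by norm_num)]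
    rw [Real.log_exp, ← Real.exp_add]
    congr 1
    push_cast
    ring
  unfold critW
  rw [← e]
  linear_combination 6 * Real.exp (-Real.log 6 * ((n + 4 : ℕ) : ℝ) / 2) * h

/-- Upper bound for the step ratio: `w(m+2)/w(m) ≤ m/(m-1) · (1 - 5m/(6N))`. -/
lemma critW_upper (N m : ℕ) (hm : 2 ≤ m) :
    6 * N * ((m : ℝ) - 1) * critW N (m + 2) ≤ m * (6 * N - 5 * m) * critW N m := by
  by_cases hN : m + 2 ≤ N ∧ N % 2 = m % 2
  · obtain ⟨n, rfl⟩ : ∃ n, m = n + 2 := ⟨m - 2, by omega⟩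
    obtain ⟨t, rfl⟩ : ∃ t, N = n + 4 + 2 * t := ⟨(N - n - 4) / 2, by omega⟩
    have h := critW_succ n t
    have hw := critW_nonneg (n + 4 + 2 * t) (n + 2)
    rw [show n + 2 + 2 = n + 4 by ring]
    generalize critW (n + 4 + 2 * t) (n + 4) = w' at *
    generalize critW (n + 4 + 2 * t) (n + 2) = w at *
    push_cast
    have hn : (0:ℝ) ≤ n := n.cast_nonneg
    have ht : (0:ℝ) ≤ t := t.cast_nonneg
    generalize (n:ℝ) = x at *
    generalize (t:ℝ) = y at *
    have hA : 0 < (2 * x + 2 * y + 7) * (x + y + 4) * (x + 2) := by positivity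
    have key : (x + 4 + 2 * y) * ((2 * x + 3 * y + 7) * (2 * x + 3) * (2 * x + 5) * (y + 2)) ≤
        (x + 2) * (6 * (x + 4 + 2 * y) - 5 * (x + 2)) *
          ((2 * x + 2 * y + 7) * (x + y + 4) * (x + 2)) := by
      rw [← sub_nonneg]
      ring_nf
      positivity
    have := mul_le_mul_of_nonneg_right key hw
    refine le_of_mul_le_mul_right ?_ hA
    linear_combination this + (x + 4 + 2 * y) * h
  · rw [critW_eq_zero (m := m + 2) (by omega), mul_zero]
    by_cases h2 : m ≤ N
    · have h3 : (m:ℝ) ≤ N := by exact_mod_cast h2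
      have : (0:ℝ) ≤ 6 * N - 5 * m := by
        have : (0:ℝ) ≤ m := m.cast_nonneg
        linarith
      have := critW_nonneg N m
      positivity
    · rw [critW_eq_zero (by omega), mul_zero]

/-- Lower bound for the step ratio: `w(m+2)/w(m) ≥ (1 + 1/m) · (1 - 10m/(3N))`. -/
lemma critW_lower (N m : ℕ) (hm : 2 ≤ m) (hN : m + 2 ≤ N) :
    ((m : ℝ) + 1) * (3 * N - 10 * m) * critW N m ≤ 3 * N * m * critW N (m + 2) := by
  by_cases hp : N % 2 = m % 2
  · obtain ⟨n, rfl⟩ : ∃ n, m = n + 2 := ⟨m - 2, by omega⟩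
    obtain ⟨t, rfl⟩ : ∃ t, N = n + 4 + 2 * t := ⟨(N - n - 4) / 2, by omega⟩
    have h := critW_succ n t
    have hw := critW_nonneg (n + 4 + 2 * t) (n + 2)
    rw [show n + 2 + 2 = n + 4 by ring]
    generalize critW (n + 4 + 2 * t) (n + 4) = w' at *
    generalize critW (n + 4 + 2 * t) (n + 2) = w at *
    push_cast
    have hn : (0:ℝ) ≤ n := n.cast_nonneg
    have ht : (0:ℝ) ≤ t := t.cast_nonneg
    generalize (n:ℝ) = x at *
    generalize (t:ℝ) = y at *
    have hA : 0 < 2 * ((2 * x + 2 * y + 7) * (x + y + 4) * (x + 1)) := by positivity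
    have key : (x + 2 + 1) * (3 * (x + 4 + 2 * y) - 10 * (x + 2)) *
          (2 * ((2 * x + 2 * y + 7) * (x + y + 4) * (x + 1))) ≤
        (x + 4 + 2 * y) * ((2 * x + 3 * y + 7) * (2 * x + 3) * (2 * x + 5) * (y + 2)) := by
      rw [← sub_nonneg]
      ring_nf
      positivity
    have := mul_le_mul_of_nonneg_right key hw
    refine le_of_mul_le_mul_right ?_ hA
    linear_combination this - (x + 4 + 2 * y) * h
  · rw [critW_eq_zero (m := m) (by omega), mul_zero]
    have := critW_nonneg N (m + 2)
    positivity

/-! ### Growth and decay of the weight on the scale `√N` -/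

/-- The weight increases below `√N/4`. -/
lemma critW_mono_step {N m : ℕ} (hm : 4 * (m : ℝ) ≤ √N) :
    critW N m ≤ critW N (m + 2) := by
  by_cases h2 : 2 ≤ m
  swap
  · rw [critW_eq_zero (by omega)]; exact critW_nonneg _ _
  have hm2 : (2:ℝ) ≤ m := by exact_mod_cast h2
  have hs : √(N:ℝ) ^ 2 = N := Real.sq_sqrt N.cast_nonneg
  have hN : 16 * (m:ℝ) ^ 2 ≤ N := by nlinarith
  have hN2 : m + 2 ≤ N := by
    have : (m:ℝ) + 2 ≤ N := by nlinarith
    exact_mod_cast this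
  have h := critW_lower N m h2 hN2
  have hw := critW_nonneg N m
  have hN0 : (0:ℝ) < N := by nlinarith
  have hc : 3 * N * (m:ℝ) ≤ (m + 1) * (3 * N - 10 * m) := by nlinarith
  have h3 := (mul_le_mul_of_nonneg_right hc hw).trans h
  exact le_of_mul_le_mul_left h3 (by positivity)

/-- Quantitative decrease of the weight above `2√N`. -/
lemma critW_decay {N m : ℕ} (hm2 : 2 ≤ m) (hN : 1 ≤ N) (hm : 2 * √N ≤ (m : ℝ)) :
    (m : ℝ) * critW N m ≤ 2 * N * (critW N m - critW N (m + 2)) := by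
  have h := critW_upper N m hm2
  have hm2' : (2:ℝ) ≤ m := by exact_mod_cast hm2
  have hN' : (1:ℝ) ≤ N := by exact_mod_cast hN
  have hs : √(N:ℝ) ^ 2 = N := Real.sq_sqrt N.cast_nonneg
  have hs0 : 0 ≤ √(N:ℝ) := Real.sqrt_nonneg _
  have hNm : 4 * (N:ℝ) ≤ (m:ℝ) ^ 2 := by nlinarith
  have hw := critW_nonneg N m
  have hc : (m:ℝ) * (6 * N - 5 * m) ≤ 3 * (m - 1) * (2 * N - m) := by nlinarith
  have h3 := h.trans (mul_le_mul_of_nonneg_right hc hw)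
  have h4 : (3 * ((m:ℝ) - 1)) * (2 * N * critW N (m + 2)) ≤
      (3 * ((m:ℝ) - 1)) * ((2 * N - m) * critW N m) := by linarith
  have := le_of_mul_le_mul_left h4 (by linarith)
  linarith

lemma critW_anti_step {N m : ℕ} (hm2 : 2 ≤ m) (hN : 1 ≤ N) (hm : 2 * √N ≤ (m : ℝ)) :
    critW N (m + 2) ≤ critW N m := by
  have h := critW_decay hm2 hN hm
  have hw := critW_nonneg N m
  have hN' : (1:ℝ) ≤ N := by exact_mod_cast hN
  have : 0 ≤ 2 * N * (critW N m - critW N (m + 2)) := le_trans (by positivity) h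
  have := nonneg_of_mul_nonneg_right this (by positivity : (0:ℝ) < 2 * N)
  linarith

/-- Over `O(√N)` steps started at order `√N`, the weight grows at most by a constant factor. -/
lemma critW_growth {N m₀ : ℕ} {δ : ℝ} (hδ : 0 < δ) (hm2 : 2 ≤ m₀) (hN : 1 ≤ N)
    (hm : δ * √N ≤ (m₀ : ℝ)) (k : ℕ) :
    critW N (m₀ + 2 * k) ≤ Real.exp (2 / (δ * √N)) ^ k * critW N m₀ := by
  induction k with
  | zero => simp
  | succ k ih =>
    have hN' : (1:ℝ) ≤ N := by exact_mod_cast hN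
    have hs : 0 < √(N:ℝ) := Real.sqrt_pos.2 (by linarith)
    have hm2' : (2:ℝ) ≤ m₀ := by exact_mod_cast hm2
    have hu := critW_upper N (m₀ + 2 * k) (by omega)
    have hw := critW_nonneg N (m₀ + 2 * k)
    set m := m₀ + 2 * k with hmdef
    have hmm : (m₀:ℝ) ≤ m := by
      rw [hmdef]; push_cast
      have : (0:ℝ) ≤ k := k.cast_nonneg
      linarith
    have h1 : ((m:ℝ) - 1) * critW N (m + 2) ≤ m * critW N m := by
      have : (6 * (N:ℝ)) * (((m:ℝ) - 1) * critW N (m + 2)) ≤ (6 * N) * (m * critW N m) := by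
        have : 0 ≤ (m:ℝ) * m * critW N m := by positivity
        linarith
      exact le_of_mul_le_mul_left this (by positivity)
    have hpos : 0 < δ * √N := by positivity
    have h2 : (m:ℝ) ≤ (m - 1) * Real.exp (2 / (δ * √N)) := by
      have he := Real.add_one_le_exp (2 / (δ * √N))
      have h5 : 1 ≤ ((m:ℝ) - 1) * (2 / (δ * √N)) := by
        rw [mul_div_assoc', le_div_iff₀ hpos]
        linarith
      nlinarith
    have h3 : ((m:ℝ) - 1) * critW N (m + 2) ≤
        (m - 1) * (Real.exp (2 / (δ * √N)) * critW N m) := by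
      have := mul_le_mul_of_nonneg_right h2 hw
      linarith
    have h4 := le_of_mul_le_mul_left h3 (by linarith)
    have e : m₀ + 2 * (k + 1) = m + 2 := by omega
    rw [e, pow_succ']
    refine h4.trans ?_
    rw [mul_assoc]
    exact mul_le_mul_of_nonneg_left ih (Real.exp_pos _).le

/-- Beyond a starting point of order `√N`, the weight never exceeds a constant multiple of its
starting value. -/
lemma critW_global {N m₀ : ℕ} {δ : ℝ} (hδ : 0 < δ) (hm2 : 2 ≤ m₀) (hN : 1 ≤ N)
    (hm : δ * √N ≤ (m₀ : ℝ)) (k : ℕ) :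
    critW N (m₀ + 2 * k) ≤ Real.exp (4 / δ) * critW N m₀ := by
  have hN' : (1:ℝ) ≤ N := by exact_mod_cast hN
  have hs : 1 ≤ √(N:ℝ) := Real.one_le_sqrt.2 hN'
  have hw := critW_nonneg N m₀
  induction k with
  | zero =>
    have : 1 ≤ Real.exp (4 / δ) := Real.one_le_exp (by positivity)
    simpa using le_mul_of_one_le_left hw this
  | succ k ih =>
    by_cases h : 2 * √N ≤ ((m₀ + 2 * k : ℕ) : ℝ)
    · exact (critW_anti_step (by omega) hN h).trans ih
    · refine (critW_growth hδ hm2 hN hm (k + 1)).trans (mul_le_mul_of_nonneg_right ?_ hw)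
      rw [← Real.exp_nat_mul]
      apply Real.exp_le_exp.2
      push Not at h
      push_cast at h ⊢
      have hk : (k:ℝ) + 1 ≤ 2 * √N := by
        have : (0:ℝ) ≤ m₀ := m₀.cast_nonneg
        linarith
      rw [mul_div_assoc', div_le_div_iff₀ (by positivity) hδ]
      nlinarith

/-- Inside the window `m ≤ b√N`, the weight loses at most a constant factor. -/
lemma critW_window {N m₀ : ℕ} {b : ℝ} (hb : 0 < b) (hm2 : 2 ≤ m₀)
    (hbN : b * √N ≤ N) (hN : 8 * b ≤ √N) (k : ℕ) (hk : ((m₀ + 2 * k : ℕ) : ℝ) ≤ b * √N) :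
    Real.exp (-(8 * b) / √N) ^ k * critW N m₀ ≤ critW N (m₀ + 2 * k) := by
  have hs : 0 < √(N:ℝ) := by linarith
  have hs2 : √(N:ℝ) ^ 2 = N := Real.sq_sqrt N.cast_nonneg
  induction k with
  | zero => simp
  | succ k ih =>
    have ih := ih (le_trans (by push_cast; linarith) hk)
    set m := m₀ + 2 * k with hmdef
    have e : m₀ + 2 * (k + 1) = m + 2 := by omega
    rw [e] at hk ⊢
    have hl := critW_lower N m (by omega) (by exact_mod_cast hk.trans hbN)
    have hw := critW_nonneg N m
    have hm0 : (2:ℝ) ≤ m := by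
      have : 2 ≤ m := by omega
      exact_mod_cast this
    have hN0 : (0:ℝ) < N := by nlinarith
    push_cast at hk
    have hE : Real.exp (-(8 * b) / √N) ≤ 1 - 4 * b / √N := by
      -- with `x = 4b/√N ≤ 1/2`, the bound `exp (-2x) ≤ 1 - x` is `1 ≤ (1 - x) (1 + 2x)`
      set x := 4 * b / √N with hx
      have hx0 : 0 < x := by positivity
      have hx1 : x ≤ 1 / 2 := by
        rw [hx, div_le_iff₀ hs]; linarith
      have e2 : -(8 * b) / √N = -(2 * x) := by rw [hx]; ring
      rw [e2, Real.exp_neg]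
      have h1 := Real.add_one_le_exp (2 * x)
      rw [inv_le_comm₀ (Real.exp_pos _) (by linarith)]
      refine le_trans ?_ h1
      rw [inv_le_iff_one_le_mul₀ (by linarith)]
      nlinarith
    have hE2 : 3 * (N:ℝ) * m * Real.exp (-(8 * b) / √N) ≤ (m + 1) * (3 * N - 10 * m) := by
      have h4 : (N:ℝ) * (1 - 4 * b / √N) = N - 4 * b * √N := by
        rw [mul_sub, mul_one, mul_div_assoc', sub_right_inj, div_eq_iff hs.ne']
        linear_combination -4 * b * hs2
      have h5 : (N:ℝ) * Real.exp (-(8 * b) / √N) ≤ N - 4 * b * √N := by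
        rw [← h4]; exact mul_le_mul_of_nonneg_left hE hN0.le
      have h6 : 3 * (N:ℝ) * Real.exp (-(8 * b) / √N) ≤ 3 * N - 12 * m := by linarith
      have h8 : 0 ≤ 3 * (N:ℝ) * Real.exp (-(8 * b) / √N) := by positivity
      have h7 : (m:ℝ) * (3 * (N:ℝ) * Real.exp (-(8 * b) / √N)) ≤ m * (3 * N - 12 * m) :=
        mul_le_mul_of_nonneg_left h6 (by linarith)
      nlinarith
    have h9 : 3 * (N:ℝ) * m * (Real.exp (-(8 * b) / √N) * critW N m) ≤
        3 * N * m * critW N (m + 2) := by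
      have := mul_le_mul_of_nonneg_right hE2 hw
      linarith
    have h10 := le_of_mul_le_mul_left h9 (by positivity)
    rw [pow_succ', mul_assoc]
    exact (mul_le_mul_of_nonneg_left ih (Real.exp_pos _).le).trans h10

/-! ### Total weights of the three ranges of lengths -/

/-- `P_N(A)` as a finite sum of weights divided by `Θ`. -/
lemma Pset_eq (N : ℕ) (A : Set ℕ) [DecidablePred (· ∈ A)] :
    Pset (Real.log 6) N A =
      (∑ m ∈ (range (N + 1)).filter (· ∈ A), critW N m) / Θ (Real.log 6) N := by
  unfold Pset
  rw [tsum_subtype A (fun m => P (Real.log 6) N m), tsum_eq_sum (s := range (N + 1)), sum_div,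
    sum_filter]
  · refine sum_congr rfl fun m _ => ?_
    by_cases h : m ∈ A <;> simp [h, P, critW]
  · intro m hm
    have hm' : ¬ m ≤ N := by simpa using hm
    have : critW N m = 0 := critW_eq_zero (by tauto)
    have hP : P (Real.log 6) N m = 0 := by
      unfold critW at this
      rw [P, this, zero_div]
    by_cases h : m ∈ A <;> simp [h, hP]

/-- Short lengths: at most `2ε√N` terms, each at most `w(m₀)` by monotonicity below `√N/4`
(weights of the wrong parity vanish). -/
lemma sum_small {N m₀ : ℕ} {ε : ℝ} (hp : N % 2 = m₀ % 2) (hs : 1 ≤ ε * √N)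
    (h1 : ε * √N ≤ m₀) (h4 : 4 * (m₀ : ℝ) ≤ √N) (s : Finset ℕ)
    (hsub : ∀ m ∈ s, (m : ℝ) < ε * √N) :
    ∑ m ∈ s, critW N m ≤ 2 * ε * √N * critW N m₀ := by
  have hmono : ∀ k m : ℕ, m + 2 * k = m₀ → critW N m ≤ critW N m₀ := by
    intro k
    induction k with
    | zero => intro m h; rw [← h]; simp
    | succ k ih =>
      intro m h
      refine (critW_mono_step ?_).trans (ih (m + 2) (by omega))
      refine le_trans ?_ h4
      have : m ≤ m₀ := by omega
      have : (m:ℝ) ≤ m₀ := by exact_mod_cast this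
      linarith
  have hle : ∀ m ∈ s, critW N m ≤ critW N m₀ := by
    intro m hm
    by_cases hpm : N % 2 = m % 2
    · have : m < m₀ := by exact_mod_cast (hsub m hm).trans_le h1
      exact hmono ((m₀ - m) / 2) m (by omega)
    · rw [critW_eq_zero (by tauto)]; exact critW_nonneg _ _
  have hcard : (s.card : ℝ) ≤ 2 * ε * √N := by
    have hss : s ⊆ range ⌈ε * √N⌉₊ := by
      intro m hm
      rw [Finset.mem_range]
      exact Nat.lt_ceil.2 (hsub m hm)
    have := card_le_card hss
    rw [card_range] at this
    have h6 : (s.card : ℝ) ≤ ⌈ε * √N⌉₊ := by exact_mod_cast this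
    have h7 := Nat.ceil_lt_add_one (show 0 ≤ ε * √N by linarith)
    linarith
  calc ∑ m ∈ s, critW N m ≤ s.card • critW N m₀ := sum_le_card_nsmul _ _ _ hle
    _ = s.card * critW N m₀ := nsmul_eq_mul _ _
    _ ≤ _ := mul_le_mul_of_nonneg_right hcard (critW_nonneg _ _)

/-- Long lengths: each weight is at most `2ε√N (w(m) - w(m+2))`, and the telescoping sum leaves two
boundary terms, each at most `exp (4/δ) w(m₀)`. -/
lemma sum_large {N m₀ : ℕ} {ε δ : ℝ} (hε : 0 < ε) (hε2 : ε ≤ 1 / 2) (hδ : 0 < δ)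
    (hp : N % 2 = m₀ % 2) (hN : 1 ≤ N)
    (hm2 : 2 ≤ m₀) (hm : δ * √N ≤ m₀) (h4 : 4 * (m₀ : ℝ) ≤ √N) (s : Finset ℕ)
    (hsub : ∀ m ∈ s, ε⁻¹ * √N < (m : ℝ)) (hsN : ∀ m ∈ s, m ≤ N) :
    ∑ m ∈ s, critW N m ≤ 4 * ε * √N * (Real.exp (4 / δ) * critW N m₀) := by
  have hN' : (1:ℝ) ≤ N := by exact_mod_cast hN
  have hr : 1 ≤ √(N:ℝ) := Real.one_le_sqrt.2 hN'
  have hs2 : √(N:ℝ) ^ 2 = N := Real.sq_sqrt N.cast_nonneg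
  set M := ⌈ε⁻¹ * √N⌉₊ with hM
  have hεi : 2 ≤ ε⁻¹ := by
    rw [le_inv_comm₀ (by norm_num) hε]; linarith
  have hMle : ε⁻¹ * √N ≤ M := Nat.le_ceil _
  have hM2s : 2 * √N ≤ (M:ℝ) := le_trans (by nlinarith) hMle
  have hMm : m₀ ≤ M := by
    have : (m₀:ℝ) ≤ M := by linarith
    exact_mod_cast this
  have hw := critW_nonneg N m₀
  have hbd : ∀ m, m₀ ≤ m → critW N m ≤ Real.exp (4 / δ) * critW N m₀ := by
    intro m hmm
    by_cases hpm : N % 2 = m % 2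
    · obtain ⟨k, rfl⟩ : ∃ k, m = m₀ + 2 * k := ⟨(m - m₀) / 2, by omega⟩
      exact critW_global hδ hm2 hN hm k
    · rw [critW_eq_zero (by tauto)]; positivity
  have hterm : ∀ m, M ≤ m → critW N m ≤ 2 * ε * √N * (critW N m - critW N (m + 2)) := by
    intro m hmm
    have hmm' : (M:ℝ) ≤ m := by exact_mod_cast hmm
    have h := critW_decay (m := m) (by omega) hN (hM2s.trans hmm')
    have hwm := critW_nonneg N m
    have h5 : √N ≤ ε * m := by
      have := hMle.trans hmm'
      rwa [inv_mul_le_iff₀ hε] at this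
    have h6 : √N * critW N m ≤ √N * (2 * ε * √N * (critW N m - critW N (m + 2))) := by
      calc √N * critW N m ≤ ε * m * critW N m := mul_le_mul_of_nonneg_right h5 hwm
        _ = ε * (m * critW N m) := by ring
        _ ≤ ε * (2 * N * (critW N m - critW N (m + 2))) := mul_le_mul_of_nonneg_left h hε.le
        _ = _ := by
          linear_combination -2 * ε * (critW N m - critW N (m + 2)) * hs2
    exact le_of_mul_le_mul_left h6 (by linarith)
  have htel : ∀ K, ∑ i ∈ range K, critW N (M + i) ≤ 2 * ε * √N *
      (critW N M + critW N (M + 1) - critW N (M + K) - critW N (M + K + 1)) := by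
    intro K
    induction K with
    | zero => simp
    | succ K ih =>
      rw [sum_range_succ]
      have := hterm (M + K) (by omega)
      rw [show M + (K + 1) + 1 = M + K + 2 by ring, show M + (K + 1) = M + K + 1 by ring]
      linarith
  calc ∑ m ∈ s, critW N m ≤ ∑ m ∈ (range (N + 1)).image (M + ·), critW N m := by
        refine sum_le_sum_of_subset_of_nonneg ?_ fun _ _ _ => critW_nonneg _ _
        intro m hms
        have h8 : M ≤ m := Nat.ceil_le.2 (hsub m hms).le
        have := hsN m hms
        rw [mem_image]
        exact ⟨m - M, by rw [Finset.mem_range]; omega, by omega⟩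
    _ = ∑ i ∈ range (N + 1), critW N (M + i) := sum_image fun x _ y _ h => by simpa using h
    _ ≤ _ := htel (N + 1)
    _ ≤ 2 * ε * √N * (Real.exp (4 / δ) * critW N m₀ + Real.exp (4 / δ) * critW N m₀) := by
        refine mul_le_mul_of_nonneg_left ?_ (by positivity)
        have := hbd M hMm
        have := hbd (M + 1) (by omega)
        have := critW_nonneg N (M + (N + 1))
        have := critW_nonneg N (M + (N + 1) + 1)
        linarith
    _ = _ := by ring

/-- Lengths in the window: there are at least `(b-a)√N/4` of them with the parity of `m₀`, and each
weight is at least `exp (-4b²) w(m₀)`. -/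
lemma sum_mid {N m₀ : ℕ} {a b : ℝ} (hb : 0 < b) (hm2 : 2 ≤ m₀)
    (hm : (m₀ : ℝ) ≤ a * √N) (hbN : b * √N ≤ N) (hN : 8 * b ≤ √N)
    (hab : 4 ≤ (b - a) * √N) (s : Finset ℕ)
    (hs : ∀ m : ℕ, a * √N ≤ m → (m : ℝ) ≤ b * √N → m ∈ s) :
    (b - a) / 4 * √N * (Real.exp (-(4 * b ^ 2)) * critW N m₀) ≤ ∑ m ∈ s, critW N m := by
  have hr : 0 < √(N:ℝ) := by linarith
  have hw := critW_nonneg N m₀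
  set k₁ := ⌈(a * √N - m₀) / 2⌉₊ with hk₁
  set k₂ := ⌊(b * √N - m₀) / 2⌋₊ + 1 with hk₂
  have hmb : 0 ≤ (b * √N - m₀) / 2 := by linarith
  have g1 : (k₁:ℝ) < (a * √N - m₀) / 2 + 1 := Nat.ceil_lt_add_one (by linarith)
  have g2 : (b * √N - m₀) / 2 < k₂ := by
    rw [hk₂]; push_cast; exact Nat.lt_floor_add_one _
  have hcard : (b - a) / 4 * √N ≤ ((k₂ - k₁ : ℕ) : ℝ) := by
    have : (k₂:ℝ) - k₁ ≤ ((k₂ - k₁ : ℕ) : ℝ) := by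
      rw [sub_le_iff_le_add]; exact_mod_cast (by omega : k₂ ≤ k₂ - k₁ + k₁)
    linarith
  have hmem : ∀ k ∈ Ico k₁ k₂, a * √N ≤ ((m₀ + 2 * k : ℕ) : ℝ) ∧
      ((m₀ + 2 * k : ℕ) : ℝ) ≤ b * √N := by
    intro k hk
    rw [Finset.mem_Ico] at hk
    have h1 : (a * √N - m₀) / 2 ≤ k := Nat.ceil_le.1 hk.1
    have h2 : (k:ℝ) ≤ (b * √N - m₀) / 2 := (Nat.le_floor_iff hmb).1 (by omega)
    push_cast
    constructor <;> linarith
  have hterm : ∀ k ∈ Ico k₁ k₂, Real.exp (-(4 * b ^ 2)) * critW N m₀ ≤ critW N (m₀ + 2 * k) := by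
    intro k hk
    obtain ⟨-, h2⟩ := hmem k hk
    refine le_trans (mul_le_mul_of_nonneg_right ?_ hw) (critW_window hb hm2 hbN hN k h2)
    rw [← Real.exp_nat_mul]
    apply Real.exp_le_exp.2
    push_cast at h2
    have hk2 : 2 * (k:ℝ) ≤ b * √N := by
      have : (0:ℝ) ≤ m₀ := m₀.cast_nonneg
      linarith
    rw [mul_div_assoc', le_div_iff₀ hr]
    nlinarith
  calc (b - a) / 4 * √N * (Real.exp (-(4 * b ^ 2)) * critW N m₀)
      ≤ ((k₂ - k₁ : ℕ) : ℝ) * (Real.exp (-(4 * b ^ 2)) * critW N m₀) :=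
        mul_le_mul_of_nonneg_right hcard (by positivity)
    _ = (Ico k₁ k₂).card • (Real.exp (-(4 * b ^ 2)) * critW N m₀) := by
        rw [Nat.card_Ico, nsmul_eq_mul]
    _ ≤ ∑ k ∈ Ico k₁ k₂, critW N (m₀ + 2 * k) := card_nsmul_le_sum _ _ _ hterm
    _ = ∑ m ∈ (Ico k₁ k₂).image (fun k => m₀ + 2 * k), critW N m :=
        (sum_image fun x _ y _ h => by simpa using h).symm
    _ ≤ _ := by
        refine sum_le_sum_of_subset_of_nonneg ?_ fun _ _ _ => critW_nonneg _ _
        intro m hm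
        obtain ⟨k, hk, rfl⟩ := mem_image.1 hm
        exact hs _ (hmem k hk).1 (hmem k hk).2

/-! ### The quotient of probabilities -/

/-- The ratio in the theorem is `O(ε)` once `N` is large. The reference length `m₀` is the largest
one of the parity of `N` below `d√N`, where `d = min a (1/4)`. -/
lemma ratio_bound {a b : ℝ} (ha : 0 < a) (hab : a < b) :
    ∃ K ε₀ : ℝ, 0 < ε₀ ∧ ∀ ε, 0 < ε → ε < ε₀ → ∀ᶠ N : ℕ in atTop,
      (Pset (Real.log 6) N {m : ℕ | (m : ℝ) < ε * Real.sqrt N} +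
        Pset (Real.log 6) N {m : ℕ | ε⁻¹ * Real.sqrt N < (m : ℝ)}) /
        Pset (Real.log 6) N {m : ℕ | a * Real.sqrt N ≤ (m : ℝ) ∧ (m : ℝ) ≤ b * Real.sqrt N}
      ≤ K * ε := by
  classical
  set d := min a (1 / 4) with hd
  have hd0 : 0 < d := lt_min ha (by norm_num)
  have hda : d ≤ a := min_le_left _ _
  have hd4 : d ≤ 1 / 4 := min_le_right _ _
  have hb : 0 < b := ha.trans hab
  set C := Real.exp (4 / (d / 2)) with hC
  set c := Real.exp (-(4 * b ^ 2)) with hc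
  have hC0 : 0 < C := Real.exp_pos _
  have hc0 : 0 < c := Real.exp_pos _
  have hba : 0 < b - a := by linarith
  refine ⟨(2 + 4 * C) / ((b - a) / 4 * c), d / 2, by positivity, fun ε hε hεd => ?_⟩
  have hsq : Tendsto (fun N : ℕ => √(N:ℝ)) atTop atTop :=
    Real.tendsto_sqrt_atTop.comp tendsto_natCast_atTop_atTop
  filter_upwards [eventually_ge_atTop 1, hsq.eventually_ge_atTop (1 / ε),
    hsq.eventually_ge_atTop (8 / d), hsq.eventually_ge_atTop (8 * b),
    hsq.eventually_ge_atTop (4 / (b - a))] with N hN h1 h2 h3 h4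
  rw [div_le_iff₀ hε] at h1
  rw [div_le_iff₀ hd0] at h2
  rw [div_le_iff₀ hba] at h4
  have hN' : (1:ℝ) ≤ N := by exact_mod_cast hN
  have hr : 1 ≤ √(N:ℝ) := Real.one_le_sqrt.2 hN'
  have hs2 : √(N:ℝ) ^ 2 = N := Real.sq_sqrt N.cast_nonneg
  obtain ⟨m₀, hp, hm1, hm3⟩ : ∃ m₀ : ℕ, N % 2 = m₀ % 2 ∧ (m₀:ℝ) ≤ d * √N ∧
      d * √N - 2 ≤ m₀ := by
    have f1 : (⌊d * √N⌋₊ : ℝ) ≤ d * √N := Nat.floor_le (by positivity)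
    have f2 := Nat.lt_floor_add_one (d * √N)
    have f3 : 1 ≤ ⌊d * √N⌋₊ := Nat.le_floor (by push_cast; linarith)
    by_cases hq : N % 2 = ⌊d * √N⌋₊ % 2
    · exact ⟨_, hq, f1, by linarith⟩
    · refine ⟨⌊d * √N⌋₊ - 1, by omega, ?_, ?_⟩ <;> rw [Nat.cast_sub f3] <;> push_cast <;> linarith
  have hm2 : 2 ≤ m₀ := by
    have : (2:ℝ) ≤ m₀ := by linarith
    exact_mod_cast this
  have hmd : d / 2 * √N ≤ m₀ := by linarith
  have hm4 : 4 * (m₀:ℝ) ≤ √N := by nlinarith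
  have hma : (m₀:ℝ) ≤ a * √N := by nlinarith
  have hmN : m₀ ≤ N := by
    have : (m₀:ℝ) ≤ N := by nlinarith
    exact_mod_cast this
  have hw := critW_pos ⟨hm2, hmN, hp⟩
  rw [Pset_eq, Pset_eq, Pset_eq, ← add_div]
  set S := ∑ m ∈ (range (N + 1)).filter (· ∈ {m : ℕ | (m : ℝ) < ε * √N}), critW N m with hS
  set L := ∑ m ∈ (range (N + 1)).filter (· ∈ {m : ℕ | ε⁻¹ * √N < (m : ℝ)}), critW N m with hL
  set M := ∑ m ∈ (range (N + 1)).filter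
    (· ∈ {m : ℕ | a * √N ≤ (m : ℝ) ∧ (m : ℝ) ≤ b * √N}), critW N m with hM
  have bS : S ≤ 2 * ε * √N * critW N m₀ :=
    sum_small hp (by linarith) (by nlinarith) hm4 _ (fun m hm => (mem_filter.1 hm).2)
  have bL : L ≤ 4 * ε * √N * (C * critW N m₀) := by
    refine sum_large hε (by linarith) (by positivity) hp hN hm2 hmd hm4 _
      (fun m hm => (mem_filter.1 hm).2) (fun m hm => ?_)
    have := mem_range.1 (mem_filter.1 hm).1
    omega
  have hbN : b * √N ≤ N := by nlinarith
  have bM : (b - a) / 4 * √N * (c * critW N m₀) ≤ M := by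
    refine sum_mid hb hm2 hma hbN h3 (by linarith) _ (fun m h5 h6 => mem_filter.2 ⟨?_, h5, h6⟩)
    rw [Finset.mem_range, Nat.lt_succ_iff]
    exact_mod_cast h6.trans hbN
  have hden : 0 < (b - a) / 4 * √N * (c * critW N m₀) := by positivity
  have hM0 : 0 < M := hden.trans_le bM
  have hΘ : 0 < Θ (Real.log 6) N := by
    refine sum_pos' (fun m _ => critW_nonneg N m) ⟨m₀, ?_, hw⟩
    rw [Finset.mem_range]; omega
  rw [div_div_div_cancel_right₀ hΘ.ne', div_le_iff₀ hM0]
  calc S + L ≤ (2 + 4 * C) / ((b - a) / 4 * c) * ε * ((b - a) / 4 * √N * (c * critW N m₀)) := by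
        refine (add_le_add bS bL).trans (le_of_eq ?_)
        field_simp
    _ ≤ _ := mul_le_mul_of_nonneg_left bM (by positivity)

lemma Pset_nonneg (N : ℕ) (A : Set ℕ) : 0 ≤ Pset (Real.log 6) N A := by
  refine tsum_nonneg fun m => div_nonneg (critW_nonneg N m) ?_
  exact sum_nonneg fun m _ => critW_nonneg N m

/-- Critical point `μ₁ = ln 6`: the boundary length is of order `√N`; for all
`0 < a < b < ∞`,
`lim_{ε→0⁺} limsup_N [P_N(m < ε√N) + P_N(m > ε⁻¹√N)] / P_N(a√N ≤ m ≤ b√N) = 0`. -/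
theorem critical_phase (μ₁ : ℝ) (hμ : μ₁ = Real.log 6) (a b : ℝ) (ha : 0 < a)
    (hab : a < b) :
    Tendsto (fun ε : ℝ =>
        Filter.limsup (fun N : ℕ =>
            (Pset μ₁ N {m : ℕ | (m : ℝ) < ε * Real.sqrt N} +
              Pset μ₁ N {m : ℕ | ε⁻¹ * Real.sqrt N < (m : ℝ)}) /
              Pset μ₁ N {m : ℕ | a * Real.sqrt N ≤ (m : ℝ) ∧ (m : ℝ) ≤ b * Real.sqrt N})
          atTop)
      (nhdsWithin 0 (Set.Ioi 0)) (nhds 0) := by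
  subst hμ
  obtain ⟨K, ε₀, hε₀, hK⟩ := ratio_bound ha hab
  have hlim : Tendsto (fun ε : ℝ => K * ε) (nhdsWithin 0 (Set.Ioi 0)) (nhds 0) := by
    have : Tendsto (fun ε : ℝ => K * ε) (nhds 0) (nhds (K * 0)) := tendsto_id.const_mul K
    rw [mul_zero] at this
    exact this.mono_left nhdsWithin_le_nhds
  have hnn : ∀ (ε : ℝ) (N : ℕ), 0 ≤ (Pset (Real.log 6) N {m : ℕ | (m : ℝ) < ε * Real.sqrt N} +
        Pset (Real.log 6) N {m : ℕ | ε⁻¹ * Real.sqrt N < (m : ℝ)}) /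
        Pset (Real.log 6) N
          {m : ℕ | a * Real.sqrt N ≤ (m : ℝ) ∧ (m : ℝ) ≤ b * Real.sqrt N} := fun ε N =>
    div_nonneg (add_nonneg (Pset_nonneg _ _) (Pset_nonneg _ _)) (Pset_nonneg _ _)
  -- the eventual bounds also show that the real-valued `limsup` is not a junk value
  have hev : ∀ᶠ ε : ℝ in nhdsWithin 0 (Set.Ioi 0), 0 < ε ∧ ε < ε₀ :=
    Ioo_mem_nhdsGT hε₀
  refine tendsto_of_tendsto_of_tendsto_of_le_of_le' tendsto_const_nhds hlim ?_ ?_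
  · filter_upwards [hev] with ε hε
    exact le_limsup_of_frequently_le (Eventually.of_forall (hnn ε)).frequently
      ⟨K * ε, eventually_map.2 (hK ε hε.1 hε.2)⟩
  · filter_upwards [hev] with ε hε
    exact limsup_le_of_le
      (isCoboundedUnder_le_of_le atTop (x := 0) (hnn ε))
      (hK ε hε.1 hε.2)
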